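/- Let X be a complex Banach space, T a bounded linear operator on X, and β an ordinal. Then T is g_σ^{β+1}-invertible if and only if there exist T-invariant subspaces M and N of X with N closed, X = M ⊕ N as an algebraic direct sum, the restriction T|_M : M → M bijective, and acc^β σ(T_N) ⊆ {0}. -/

import Mathlib

open Ordinal Set

/-- The `α`-th Cantor–Bendixson derivative of a set `A ⊆ ℂ`, defined by transfinite
recursion: `cbd A 0 = A`, `cbd A (β+1) = derivedSet (cbd A β)` (the set of accumulation
points of `cbd A β`), and `cbd A α = ⋂_{β < α} cbd A β` for limit ordinals `α`. -/
noncomputable def cbd (A : Set ℂ) (α : Ordinal) : Set ℂ :=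
  Ordinal.limitRecOn α A (fun _ ih => derivedSet ih)
    (fun α _ ih => ⋂ (β : Set.Iio α), ih β.1 β.2)

variable {X : Type*} [NormedAddCommGroup X] [NormedSpace ℂ X] [CompleteSpace X]

/-- The restriction `T_M` of a bounded operator `T` to a `T`-invariant subspace `M`. -/
noncomputable def restr (T : X →L[ℂ] X) (M : Submodule ℂ X)
    (hM : ∀ x ∈ M, T x ∈ M) : M →L[ℂ] M :=
  { toLinearMap := T.toLinearMap.restrict hM
    cont := (T.continuous.comp continuous_subtype_val).subtype_mk _ }


/-- `T` is `g_σ^{β+1}`-invertible: there is `(M, N) ∈ Red T` (a pair of closed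
`T`-invariant subspaces with `X = M ⊕ N`) such that `T_M` is invertible and
`acc^β σ(T_N) ⊆ {0}`. -/
def GInv (β : Ordinal) (T : X →L[ℂ] X) : Prop :=
  ∃ (M N : Submodule ℂ X) (hM : ∀ x ∈ M, T x ∈ M) (hN : ∀ x ∈ N, T x ∈ N),
    IsClosed (M : Set X) ∧ IsClosed (N : Set X) ∧ IsCompl M N ∧
    IsUnit (restr T M hM) ∧ cbd (spectrum ℂ (restr T N hN)) β ⊆ {0}

/-!
Suppose `X = M ⊕ N` algebraically with `N` closed and `T : M → M` bijective. Since `X ⧸ N ≅ M` as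
vector spaces, the operator induced by `T` on the Banach space `X ⧸ N` is bijective, hence
invertible, and a small disc about `0` lies in its resolvent set. As `acc^β σ(T_N) ⊆ {0}` is
countable, `σ(T_N)` contains no nonempty perfect set, so it is countable and some circle about `0`
inside that disc avoids it; this circle then avoids `σ(T)` as well. Let `P` be the Riesz projection
of `T` over the circle. The quotient map sends it to the corresponding Riesz projection in `X ⧸ N`,
which vanishes because the disc contains no spectrum there; so `range P ⊆ N`. Now `T` is invertible
on `ker P`, and `σ(T_{range P}) ⊆ σ(T_N)` because `range P` is a direct summand of `N` reducing
`T_N`. Thus `(ker P, range P)` is the required pair of closed subspaces.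
-/

open Metric

section HolomorphicCalculus

variable {A : Type*} [NormedRing A] [NormedAlgebra ℂ A] [CompleteSpace A]

theorem resolvent_mul_algebraMap_sub {R B : Type*} [CommSemiring R] [Ring B] [Algebra R B]
    {b : B} {z : R} (hz : z ∈ resolventSet R b) : resolvent b z * (algebraMap R B z - b) = 1 :=
  Ring.inverse_mul_cancel _ hz

theorem algebraMap_sub_mul_resolvent {R B : Type*} [CommSemiring R] [Ring B] [Algebra R B]
    {b : B} {z : R} (hz : z ∈ resolventSet R b) : (algebraMap R B z - b) * resolvent b z = 1 :=
  Ring.mul_inverse_cancel _ hz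

theorem commute_resolvent {R B : Type*} [CommSemiring R] [Ring B] [Algebra R B] {b : B} {z : R}
    (hz : z ∈ resolventSet R b) : Commute b (resolvent b z) := by
  rw [spectrum.resolvent_eq hz]
  exact Commute.units_inv_right <| (Algebra.commute_algebraMap_right z b).sub_right (.refl b)

theorem differentiableOn_resolvent (a : A) :
    DifferentiableOn ℂ (resolvent a) (resolventSet ℂ a) := fun _ hz =>
  (spectrum.hasDerivAt_resolvent_const_left hz).differentiableAt.differentiableWithinAt

theorem circleIntegrable_resolvent {a : A} {c : ℂ} {r : ℝ} (hr : 0 ≤ r)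
    (ha : sphere c r ⊆ resolventSet ℂ a) : CircleIntegrable (resolvent a) c r :=
  ((differentiableOn_resolvent a).continuousOn.mono ha).circleIntegrable hr

theorem map_circleIntegral {E F : Type*} [NormedAddCommGroup E] [NormedSpace ℂ E]
    [CompleteSpace E] [NormedAddCommGroup F] [NormedSpace ℂ F] [CompleteSpace F]
    (L : E →L[ℂ] F) {f : ℂ → E} {c : ℂ} {r : ℝ} (hf : CircleIntegrable f c r) :
    L (∮ z in C(c, r), f z) = ∮ z in C(c, r), L (f z) := by
  simp only [circleIntegral, ← L.intervalIntegral_comp_comm hf.out, map_smul]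

theorem mul_circleIntegral (b : A) {f : ℂ → A} {c : ℂ} {r : ℝ} (hf : CircleIntegrable f c r) :
    b * ∮ z in C(c, r), f z = ∮ z in C(c, r), b * f z :=
  map_circleIntegral (ContinuousLinearMap.mul ℂ A b) hf

theorem circleIntegral_mul (b : A) {f : ℂ → A} {c : ℂ} {r : ℝ} (hf : CircleIntegrable f c r) :
    (∮ z in C(c, r), f z) * b = ∮ z in C(c, r), f z * b :=
  map_circleIntegral ((ContinuousLinearMap.mul ℂ A).flip b) hf

/-- The Riesz projection `P = (2πi)⁻¹ ∮ (z - a)⁻¹ dz` of `a` over the circle `C(c, r)`. It is an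
idempotent as soon as the circle lies in the resolvent set of `a`; the disc it bounds may contain
points of the spectrum. -/
noncomputable def rieszProjection (a : A) (c : ℂ) (r : ℝ) : A :=
  (2 * Real.pi * Complex.I : ℂ)⁻¹ • ∮ z in C(c, r), resolvent a z

/-- The Cauchy integral `(2πi)⁻¹ ∮ (z - w)⁻¹ (z - a)⁻¹ dz` of the resolvent of `a` over the circle
`C(c, r)`. For `w` inside the circle it inverts `w - a` on the range of `1 - P`, where `P` is the
Riesz projection over the same circle. -/
noncomputable def resolventCauchyIntegral (a : A) (c : ℂ) (r : ℝ) (w : ℂ) : A :=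
  (2 * Real.pi * Complex.I : ℂ)⁻¹ • ∮ z in C(c, r), (z - w)⁻¹ • resolvent a z

variable {a : A} {c w : ℂ} {r : ℝ}

theorem sub_ne_zero_of_mem_sphere_of_mem_ball {z : ℂ} (hz : z ∈ sphere c r) (hw : w ∈ ball c r) :
    z - w ≠ 0 := by
  rintro h
  rw [sub_eq_zero.1 h, mem_sphere] at hz
  exact (mem_ball.1 hw).ne hz

theorem continuousOn_sub_inv_sphere (hw : w ∈ ball c r) :
    ContinuousOn (fun z => (z - w)⁻¹) (sphere c r) :=
  ContinuousOn.inv₀ (by fun_prop) fun _ hz => sub_ne_zero_of_mem_sphere_of_mem_ball hz hw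

theorem circleIntegrable_sub_inv_smul_resolvent (ha : sphere c r ⊆ resolventSet ℂ a)
    (hw : w ∈ ball c r) : CircleIntegrable (fun z => (z - w)⁻¹ • resolvent a z) c r :=
  ((continuousOn_sub_inv_sphere hw).smul
    ((differentiableOn_resolvent a).continuousOn.mono ha)).circleIntegrable (pos_of_mem_ball hw).le

theorem algebraMap_sub_mul_resolventCauchyIntegral (ha : sphere c r ⊆ resolventSet ℂ a)
    (hw : w ∈ ball c r) :
    (algebraMap ℂ A w - a) * resolventCauchyIntegral a c r w = 1 - rieszProjection a c r := by
  have hr : 0 ≤ r := (pos_of_mem_ball hw).le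
  have hinv : CircleIntegrable (fun z => (z - w)⁻¹ • (1 : A)) c r :=
    ((continuousOn_sub_inv_sphere hw).smul continuousOn_const).circleIntegrable hr
  have integrand_eq : EqOn (fun z => (algebraMap ℂ A w - a) * ((z - w)⁻¹ • resolvent a z))
      (fun z => (z - w)⁻¹ • (1 : A) - resolvent a z) (sphere c r) := fun z hz => by
    have hzw := sub_ne_zero_of_mem_sphere_of_mem_ball hz hw
    have : (algebraMap ℂ A w - a) * resolvent a z = 1 - (z - w) • resolvent a z := by
      rw [← algebraMap_sub_mul_resolvent (ha hz), Algebra.smul_def, map_sub]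
      noncomm_ring
    simp only [mul_smul_comm, this, smul_sub, inv_smul_smul₀ hzw]
  rw [resolventCauchyIntegral, rieszProjection, mul_smul_comm,
    mul_circleIntegral _ (circleIntegrable_sub_inv_smul_resolvent ha hw),
    circleIntegral.integral_congr hr integrand_eq,
    circleIntegral.integral_sub hinv (circleIntegrable_resolvent hr ha),
    circleIntegral.integral_smul_const, circleIntegral.integral_sub_inv_of_mem_ball hw,
    smul_sub, inv_smul_smul₀ Complex.two_pi_I_ne_zero]

theorem commute_resolventCauchyIntegral (ha : sphere c r ⊆ resolventSet ℂ a) (hw : w ∈ ball c r) :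
    Commute a (resolventCauchyIntegral a c r w) := by
  have hint := circleIntegrable_sub_inv_smul_resolvent ha hw
  refine Commute.smul_right ?_ _
  rw [commute_iff_eq, mul_circleIntegral a hint, circleIntegral_mul a hint]
  exact circleIntegral.integral_congr (pos_of_mem_ball hw).le fun z hz =>
    ((commute_resolvent (ha hz)).smul_right _).eq

theorem differentiableOn_resolventCauchyIntegral (ha : sphere c r ⊆ resolventSet ℂ a) :
    DifferentiableOn ℂ (resolventCauchyIntegral a c r) (ball c r) := by
  rcases le_or_gt r 0 with hr | hr
  · simp only [ball_eq_empty.2 hr, differentiableOn_empty]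
  lift r to NNReal using hr.le
  rw [← eball_coe]
  exact (hasFPowerSeriesOn_cauchy_integral (circleIntegrable_resolvent hr.le ha)
    (NNReal.coe_pos.1 hr)).differentiableOn

theorem rieszProjection_eq_zero (hr : 0 ≤ r) (ha : closedBall c r ⊆ resolventSet ℂ a) :
    rieszProjection a c r = 0 := by
  rw [rieszProjection, (DifferentiableOn.diffContOnCl_ball (U := resolventSet ℂ a)
    (differentiableOn_resolvent a) ha).circleIntegral_eq_zero hr, smul_zero]

theorem rieszProjection_eq_of_annulus_subset {s : ℝ} (hs : 0 < s) (hsr : s ≤ r)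
    (ha : closedBall c r \ ball c s ⊆ resolventSet ℂ a) :
    rieszProjection a c r = rieszProjection a c s := by
  have hopen := spectrum.isOpen_resolventSet (𝕜 := ℂ) a
  rw [rieszProjection, rieszProjection,
    Complex.circleIntegral_eq_of_differentiable_on_annulus_off_countable hs hsr countable_empty
      ((differentiableOn_resolvent a).continuousOn.mono ha)]
  refine fun z hz => (differentiableOn_resolvent a).differentiableAt (hopen.mem_nhds (ha ?_))
  exact ⟨ball_subset_closedBall hz.1.1, fun h => hz.1.2 (ball_subset_closedBall h)⟩

theorem exists_annulus_subset_resolventSet (hr : 0 < r) (ha : sphere c r ⊆ resolventSet ℂ a) :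
    ∃ s, 0 < s ∧ s < r ∧ closedBall c r \ ball c s ⊆ resolventSet ℂ a := by
  have hclosed : IsClosed ((dist · c) '' spectrum ℂ a) :=
    ((spectrum.isCompact a).image (by fun_prop)).isClosed
  have hr_mem : r ∈ ((dist · c) '' spectrum ℂ a)ᶜ := by
    rintro ⟨z, hz, hzr⟩
    exact hz (ha hzr)
  obtain ⟨s, hsr, hs⟩ := exists_Ioc_subset_of_mem_nhds' (hclosed.isOpen_compl.mem_nhds hr_mem) hr
  obtain ⟨t, hst, htr⟩ := exists_between hsr.2
  refine ⟨t, hsr.1.trans_lt hst, htr, fun z hz => not_not.1 fun hzσ => ?_⟩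
  exact hs ⟨hst.trans_le (not_lt.1 hz.2), hz.1⟩ ⟨z, hzσ, rfl⟩

/- Shrink the circle to radius `s < r` without changing `P`. On the smaller circle
`(w - a)⁻¹ (1 - P)` is the Cauchy integral over the larger one, which is analytic in the disc, so
integrating over `w` gives `P (1 - P) = 0`. -/
theorem isIdempotentElem_rieszProjection (hr : 0 < r) (ha : sphere c r ⊆ resolventSet ℂ a) :
    IsIdempotentElem (rieszProjection a c r) := by
  obtain ⟨s, hs, hsr, hann⟩ := exists_annulus_subset_resolventSet hr ha
  have hball : closedBall c s ⊆ ball c r := closedBall_subset_ball hsr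
  have hsphere : sphere c s ⊆ resolventSet ℂ a := fun z hz =>
    hann ⟨ball_subset_closedBall (hball (sphere_subset_closedBall hz)),
      fun h => (mem_ball.1 h).ne hz⟩
  have resolvent_mul : EqOn (fun w => resolvent a w * (1 - rieszProjection a c r))
      (resolventCauchyIntegral a c r) (sphere c s) := fun w hw => by
    simp only [← algebraMap_sub_mul_resolventCauchyIntegral ha
      (hball (sphere_subset_closedBall hw)), ← mul_assoc,
      resolvent_mul_algebraMap_sub (hsphere hw), one_mul]
  have mul_one_sub_eq_zero : rieszProjection a c s * (1 - rieszProjection a c r) = 0 := by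
    rw [rieszProjection, smul_mul_assoc,
      circleIntegral_mul _ (circleIntegrable_resolvent hs.le hsphere),
      circleIntegral.integral_congr hs.le resolvent_mul,
      ((differentiableOn_resolventCauchyIntegral ha).diffContOnCl_ball hball).circleIntegral_eq_zero
        hs.le, smul_zero]
  rw [← rieszProjection_eq_of_annulus_subset hs hsr.le hann] at mul_one_sub_eq_zero
  exact isIdempotentElem_iff_mul_one_sub_self.2 mul_one_sub_eq_zero

end HolomorphicCalculus

section CantorBendixson

theorem cbd_zero (S : Set ℂ) : cbd S 0 = S :=
  Ordinal.limitRecOn_zero _ _ _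

theorem cbd_add_one (S : Set ℂ) (α : Ordinal) : cbd S (α + 1) = derivedSet (cbd S α) :=
  Ordinal.limitRecOn_add_one _ _ _ _

theorem cbd_of_isSuccLimit (S : Set ℂ) {α : Ordinal} (hα : Order.IsSuccLimit α) :
    cbd S α = ⋂ β : Iio α, cbd S β :=
  Ordinal.limitRecOn_limit _ _ _ _ hα

theorem cbd_mono {S S' : Set ℂ} (h : S ⊆ S') (α : Ordinal) : cbd S α ⊆ cbd S' α := by
  induction α using Ordinal.limitRecOn with
  | zero => simpa only [cbd_zero] using h
  | add_one α ih => simpa only [cbd_add_one] using derivedSet_mono _ _ ih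
  | limit α hα ih =>
    simpa only [cbd_of_isSuccLimit _ hα] using iInter_mono fun β : Iio α => ih β β.2

theorem subset_cbd_of_preperfect {S D : Set ℂ} (hD : Preperfect D) (h : D ⊆ S) (α : Ordinal) :
    D ⊆ cbd S α := by
  induction α using Ordinal.limitRecOn with
  | zero => rwa [cbd_zero]
  | add_one α ih =>
    rw [cbd_add_one]
    exact (preperfect_iff_subset_derivedSet.1 hD).trans (derivedSet_mono _ _ ih)
  | limit α hα ih =>
    rw [cbd_of_isSuccLimit _ hα]
    exact subset_iInter fun β => ih β β.2

theorem countable_of_countable_cbd {S : Set ℂ} (hS : IsClosed S) {α : Ordinal}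
    (h : (cbd S α).Countable) : S.Countable := by
  obtain ⟨V, D, hV, hD, rfl⟩ := exists_countable_union_perfect_of_isClosed hS
  exact hV.union (h.mono (subset_cbd_of_preperfect hD.acc subset_union_right α))

end CantorBendixson

theorem exists_disjoint_sphere_of_countable {α : Type*} [PseudoMetricSpace α] {s : Set α}
    (hs : s.Countable) (c : α) {ε : ℝ} (hε : 0 < ε) :
    ∃ r ∈ Ioo 0 ε, Disjoint (sphere c r) s := by
  by_contra! h
  refine (Cardinal.Real.Ioo_countable_iff.1 ((hs.image (dist · c)).mono fun r hr => ?_)).not_gt hε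
  obtain ⟨z, hzr, hzs⟩ := not_disjoint_iff.1 (h r hr)
  exact ⟨z, hzs, hzr⟩

section LinearAlgebra

variable {R E : Type*} [Ring R] [AddCommGroup E] [Module R E] {f g p : Module.End R E}
  {M N : Submodule R E}

theorem bijOn_range_of_isIdempotentElem (hp : IsIdempotentElem p) (hfp : Commute f p)
    (hpN : LinearMap.range p ≤ N) (hf : BijOn f N N) :
    BijOn f (LinearMap.range p) (LinearMap.range p) := by
  have hfp_apply (x : E) : f (p x) = p (f x) := LinearMap.congr_fun hfp x
  refine ⟨?_, hf.injOn.mono hpN, ?_⟩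
  · rintro _ ⟨x, rfl⟩
    exact ⟨f x, (hfp_apply x).symm⟩
  · intro y hy
    obtain ⟨x, -, hx⟩ := hf.surjOn (hpN hy)
    refine ⟨p x, ⟨x, rfl⟩, ?_⟩
    rw [hfp_apply, hx, (LinearMap.IsIdempotentElem.mem_range_iff hp).1 hy]

theorem mapsTo_ker_of_commute (hfp : Commute f p) :
    MapsTo f (LinearMap.ker p) (LinearMap.ker p) := fun x hx => by
  rw [SetLike.mem_coe, LinearMap.mem_ker] at hx ⊢
  rw [← Module.End.mul_apply, ← hfp.eq, Module.End.mul_apply, hx, map_zero]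

theorem bijOn_ker_of_mul_eq_one_sub (hfg : Commute f g) (h : f * g = 1 - p) :
    BijOn f (LinearMap.ker p) (LinearMap.ker p) := by
  have hp : p = 1 - f * g := by rw [h, sub_sub_cancel]
  have hfp : Commute f p := hp ▸ (Commute.one_right f).sub_right ((Commute.refl f).mul_right hfg)
  have hgp : Commute g p := hp ▸ (Commute.one_right g).sub_right (hfg.symm.mul_right (.refl g))
  have right_inv (x : E) (hx : x ∈ LinearMap.ker p) : f (g x) = x := by
    simpa [LinearMap.mem_ker.1 hx] using LinearMap.congr_fun h x
  have left_inv (x : E) (hx : x ∈ LinearMap.ker p) : g (f x) = x :=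
    (LinearMap.congr_fun hfg x).symm.trans (right_inv x hx)
  exact InvOn.bijOn ⟨left_inv, right_inv⟩ (mapsTo_ker_of_commute hfp) (mapsTo_ker_of_commute hgp)

theorem bijective_mapQ_of_isCompl (hMN : IsCompl M N) (hM : ∀ x ∈ M, f x ∈ M) (hN : N ≤ N.comap f)
    (hf : Function.Bijective (f.restrict hM)) : Function.Bijective (N.mapQ N f hN) := by
  let e := (N.quotientEquivOfIsCompl M hMN.symm).symm
  have : N.mapQ N f hN ∘ e = e ∘ f.restrict hM := rfl
  exact (Function.Bijective.of_comp_iff _ e.bijective).1 (this ▸ e.bijective.comp hf)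

theorem bijective_of_bijOn_of_bijective_mapQ (hN : N ≤ N.comap f) (hf : BijOn f N N)
    (hq : Function.Bijective (N.mapQ N f hN)) : Function.Bijective f := by
  constructor
  · refine (injective_iff_map_eq_zero f).2 fun x hx => ?_
    have hxN : x ∈ N := by
      rw [← Submodule.Quotient.mk_eq_zero]
      exact (injective_iff_map_eq_zero _).1 hq.1 _ ((congrArg N.mkQ hx).trans (map_zero _))
    exact hf.injOn hxN N.zero_mem (hx.trans (map_zero f).symm)
  · intro y
    obtain ⟨q, hqy⟩ := hq.2 (N.mkQ y)
    obtain ⟨x, rfl⟩ := N.mkQ_surjective q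
    obtain ⟨n, -, hn⟩ := hf.surjOn ((Submodule.Quotient.eq N).1 hqy.symm)
    exact ⟨x + n, by rw [map_add, hn, _root_.add_sub_cancel]⟩

end LinearAlgebra

section QuotientOperator

variable {R E : Type*} [Ring R] [TopologicalSpace E] [AddCommGroup E] [Module R E]

/-- The operator `T_{E/N}` induced by a continuous linear operator `T` on the quotient of `E` by a
`T`-invariant submodule `N`; its underlying linear map is `Submodule.mapQ`. -/
def quotientOperator (T : E →L[R] E) (N : Submodule R E) (hN : ∀ x ∈ N, T x ∈ N) :
    E ⧸ N →L[R] E ⧸ N :=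
  N.liftQL (N.mkQL ∘L T) fun x hx => (Submodule.Quotient.mk_eq_zero N).2 (hN x hx)

theorem mkQL_comp_eq_quotientOperator_comp (T : E →L[R] E) (N : Submodule R E)
    (hN : ∀ x ∈ N, T x ∈ N) : N.mkQL ∘L T = quotientOperator T N hN ∘L N.mkQL := rfl

theorem algebraMap_sub_quotientOperator {R E : Type*} [CommRing R] [TopologicalSpace R]
    [TopologicalSpace E] [AddCommGroup E] [IsTopologicalAddGroup E] [Module R E]
    [ContinuousSMul R E] (T : E →L[R] E) (N : Submodule R E) (hN : ∀ x ∈ N, T x ∈ N) (z : R) :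
    algebraMap R (E ⧸ N →L[R] E ⧸ N) z - quotientOperator T N hN =
      quotientOperator (algebraMap R (E →L[R] E) z - T) N fun x hx =>
        N.sub_mem (N.smul_mem z hx) (hN x hx) := by
  ext q
  obtain ⟨x, rfl⟩ := N.mkQ_surjective q
  rfl

end QuotientOperator

section Intertwining

theorem comp_resolvent_eq_resolvent_comp {R E F : Type*} [CommRing R] [TopologicalSpace E]
    [AddCommGroup E] [IsTopologicalAddGroup E] [Module R E] [ContinuousConstSMul R E]
    [TopologicalSpace F] [AddCommGroup F] [IsTopologicalAddGroup F] [Module R F]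
    [ContinuousConstSMul R F] {S : E →L[R] E} {T : F →L[R] F} {p : E →L[R] F}
    (h : p ∘L S = T ∘L p) {z : R} (hS : z ∈ resolventSet R S) (hT : z ∈ resolventSet R T) :
    p ∘L resolvent S z = resolvent T z ∘L p := by
  have h_sub : p ∘L (algebraMap R _ z - S) = (algebraMap R _ z - T) ∘L p := by
    ext x
    simpa [Algebra.algebraMap_eq_smul_one] using DFunLike.congr_fun h x
  calc p ∘L resolvent S z
      = (resolvent T z * (algebraMap R _ z - T)) ∘L p ∘L resolvent S z := by
        rw [resolvent_mul_algebraMap_sub hT, ContinuousLinearMap.one_def,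
          ContinuousLinearMap.id_comp]
    _ = resolvent T z ∘L (p ∘L (algebraMap R _ z - S)) ∘L resolvent S z := by rw [h_sub]; rfl
    _ = resolvent T z ∘L p ∘L ((algebraMap R _ z - S) * resolvent S z) := rfl
    _ = resolvent T z ∘L p := by
        rw [algebraMap_sub_mul_resolvent hS, ContinuousLinearMap.one_def,
          ContinuousLinearMap.comp_id]

variable {E F : Type*} [NormedAddCommGroup E] [NormedSpace ℂ E] [CompleteSpace E]
  [NormedAddCommGroup F] [NormedSpace ℂ F] [CompleteSpace F]

theorem comp_rieszProjection_eq_rieszProjection_comp {S : E →L[ℂ] E} {T : F →L[ℂ] F}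
    {p : E →L[ℂ] F} (h : p ∘L S = T ∘L p) {c : ℂ} {r : ℝ} (hr : 0 ≤ r)
    (hS : sphere c r ⊆ resolventSet ℂ S) (hT : sphere c r ⊆ resolventSet ℂ T) :
    p ∘L rieszProjection S c r = rieszProjection T c r ∘L p := by
  have hpS : p ∘L (∮ z in C(c, r), resolvent S z) = ∮ z in C(c, r), p ∘L resolvent S z :=
    map_circleIntegral (.compL ℂ E E F p) (circleIntegrable_resolvent hr hS)
  have hTp : (∮ z in C(c, r), resolvent T z) ∘L p = ∮ z in C(c, r), resolvent T z ∘L p :=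
    map_circleIntegral ((ContinuousLinearMap.compL ℂ E F F).flip p)
      (circleIntegrable_resolvent hr hT)
  rw [rieszProjection, rieszProjection, ContinuousLinearMap.comp_smul,
    ContinuousLinearMap.smul_comp, hpS, hTp, circleIntegral.integral_congr hr fun z hz =>
      comp_resolvent_eq_resolvent_comp h (hS hz) (hT hz)]

theorem commute_rieszProjection {T : E →L[ℂ] E} {c : ℂ} {r : ℝ} (hr : 0 ≤ r)
    (hT : sphere c r ⊆ resolventSet ℂ T) : Commute T (rieszProjection T c r) :=
  comp_rieszProjection_eq_rieszProjection_comp rfl hr hT hT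

end Intertwining

section InvariantSubspace

variable {E : Type*} [NormedAddCommGroup E] [NormedSpace ℂ E] {T : E →L[ℂ] E}
  {M N : Submodule ℂ E}

theorem bijective_restr_iff (hM : ∀ x ∈ M, T x ∈ M) :
    Function.Bijective (restr T M hM) ↔ BijOn T M M :=
  ⟨fun h => ⟨hM, (MapsTo.restrict_inj hM).1 h.1, (MapsTo.restrict_surjective_iff hM).1 h.2⟩,
    fun h => h.bijective⟩

theorem mem_resolventSet_restr_iff [CompleteSpace M] (hM : ∀ x ∈ M, T x ∈ M) {z : ℂ} :
    z ∈ resolventSet ℂ (restr T M hM) ↔ BijOn (algebraMap ℂ (E →L[ℂ] E) z - T) M M := by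
  have hzM : ∀ x ∈ M, (algebraMap ℂ (E →L[ℂ] E) z - T) x ∈ M := fun x hx =>
    M.sub_mem (M.smul_mem z hx) (hM x hx)
  rw [← bijective_restr_iff hzM, ← ContinuousLinearMap.isUnit_iff_bijective]
  rfl

theorem mem_resolventSet_of_restr_of_quotientOperator [CompleteSpace E] [IsClosed (N : Set E)]
    (hN : ∀ x ∈ N, T x ∈ N) {z : ℂ} (hzN : z ∈ resolventSet ℂ (restr T N hN))
    (hzq : z ∈ resolventSet ℂ (quotientOperator T N hN)) : z ∈ resolventSet ℂ T := by
  have : CompleteSpace N := IsClosed.completeSpace_coe (s := (N : Set E))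
  rw [mem_resolventSet_restr_iff] at hzN
  rw [spectrum.mem_resolventSet_iff, ContinuousLinearMap.isUnit_iff_bijective] at hzq ⊢
  rw [algebraMap_sub_quotientOperator] at hzq
  exact bijective_of_bijOn_of_bijective_mapQ (f := (algebraMap ℂ (E →L[ℂ] E) z - T).toLinearMap)
    hzN.mapsTo hzN hzq

theorem isUnit_quotientOperator_of_isCompl [CompleteSpace E] [IsClosed (N : Set E)]
    (hMN : IsCompl M N) (hM : ∀ x ∈ M, T x ∈ M) (hN : ∀ x ∈ N, T x ∈ N)
    (hT : Function.Bijective (restr T M hM)) : IsUnit (quotientOperator T N hN) :=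
  ContinuousLinearMap.isUnit_iff_bijective.2
    (bijective_mapQ_of_isCompl (f := T.toLinearMap) hMN hM hN hT)

theorem spectrum_restr_range_subset [CompleteSpace E] [CompleteSpace N] {P : E →L[ℂ] E}
    (hP : IsIdempotentElem P) (hTP : Commute T P) (hPN : P.range ≤ N)
    (hN : ∀ x ∈ N, T x ∈ N) (hPT : ∀ x ∈ P.range, T x ∈ P.range) :
    spectrum ℂ (restr T P.range hPT) ⊆ spectrum ℂ (restr T N hN) := by
  have := (ContinuousLinearMap.IsIdempotentElem.isClosed_range hP).completeSpace_coe
  refine compl_subset_compl.2 fun z hz => ?_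
  rw [mem_resolventSet_restr_iff] at hz ⊢
  have hzTP := (Algebra.commute_algebraMap_left z P).sub_left hTP
  exact bijOn_range_of_isIdempotentElem (ContinuousLinearMap.IsIdempotentElem.toLinearMap hP)
    (hzTP.map ContinuousLinearMap.toLinearMapRingHom) hPN hz

theorem exists_sphere_subset_resolventSet [CompleteSpace E] [IsClosed (N : Set E)]
    (hN : ∀ x ∈ N, T x ∈ N) (hcount : (spectrum ℂ (restr T N hN)).Countable) {c : ℂ}
    (hc : c ∈ resolventSet ℂ (quotientOperator T N hN)) :
    ∃ r > 0, closedBall c r ⊆ resolventSet ℂ (quotientOperator T N hN) ∧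
      sphere c r ⊆ resolventSet ℂ T := by
  obtain ⟨ε, hε, hball⟩ := Metric.isOpen_iff.1
    (spectrum.isOpen_resolventSet (𝕜 := ℂ) (quotientOperator T N hN)) c hc
  obtain ⟨r, hr, hdisj⟩ := exists_disjoint_sphere_of_countable hcount c hε
  have hclosedBall := (closedBall_subset_ball hr.2).trans hball
  refine ⟨r, hr.1, hclosedBall, fun z hz => ?_⟩
  exact mem_resolventSet_of_restr_of_quotientOperator hN
    (not_not.1 (hdisj.notMem_of_mem_left hz)) (hclosedBall (sphere_subset_closedBall hz))

theorem range_rieszProjection_le [CompleteSpace E] [IsClosed (N : Set E)]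
    (hN : ∀ x ∈ N, T x ∈ N) {c : ℂ} {r : ℝ} (hr : 0 ≤ r)
    (hq : closedBall c r ⊆ resolventSet ℂ (quotientOperator T N hN))
    (hT : sphere c r ⊆ resolventSet ℂ T) : (rieszProjection T c r).range ≤ N := by
  have hzero : N.mkQL ∘L rieszProjection T c r = 0 := by
    rw [comp_rieszProjection_eq_rieszProjection_comp (mkQL_comp_eq_quotientOperator_comp T N hN) hr
      hT (sphere_subset_closedBall.trans hq), rieszProjection_eq_zero hr hq,
      ContinuousLinearMap.zero_comp]
  rintro _ ⟨x, rfl⟩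
  exact (Submodule.Quotient.mk_eq_zero N).1 (DFunLike.congr_fun hzero x)

theorem ball_subset_resolventSet_restr_ker [CompleteSpace E] {c : ℂ} {r : ℝ}
    (hT : sphere c r ⊆ resolventSet ℂ T)
    (hker : ∀ x ∈ (rieszProjection T c r).ker, T x ∈ (rieszProjection T c r).ker) :
    ball c r ⊆ resolventSet ℂ (restr T (rieszProjection T c r).ker hker) := fun w hw => by
  have hcomm := (Algebra.commute_algebraMap_left w _).sub_left
    (commute_resolventCauchyIntegral hT hw)
  rw [mem_resolventSet_restr_iff]
  exact bijOn_ker_of_mul_eq_one_sub (hcomm.map ContinuousLinearMap.toLinearMapRingHom)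
    (congrArg ContinuousLinearMap.toLinearMap (algebraMap_sub_mul_resolventCauchyIntegral hT hw))

theorem gInv_of_closedBall_subset_resolventSet [CompleteSpace E] [IsClosed (N : Set E)]
    (hN : ∀ x ∈ N, T x ∈ N) {β : Ordinal} (hβ : cbd (spectrum ℂ (restr T N hN)) β ⊆ {0})
    {r : ℝ} (hr : 0 < r) (hq : closedBall 0 r ⊆ resolventSet ℂ (quotientOperator T N hN))
    (hT : sphere 0 r ⊆ resolventSet ℂ T) : GInv β T := by
  have : CompleteSpace N := IsClosed.completeSpace_coe (s := (N : Set E))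
  have hP := isIdempotentElem_rieszProjection hr hT
  have hTP := commute_rieszProjection hr.le hT
  obtain ⟨hrange, hker⟩ := (ContinuousLinearMap.IsIdempotentElem.commute_iff hP).1 hTP.symm
  exact ⟨_, _, hker, hrange, ContinuousLinearMap.isClosed_ker _,
    ContinuousLinearMap.IsIdempotentElem.isClosed_range hP,
    (LinearMap.IsIdempotentElem.isCompl (ContinuousLinearMap.IsIdempotentElem.toLinearMap hP)).symm,
    (spectrum.zero_notMem_iff ℂ).1 (not_not.2
      (ball_subset_resolventSet_restr_ker hT hker (mem_ball_self hr))),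
    (cbd_mono (spectrum_restr_range_subset hP hTP
      (range_rieszProjection_le hN hr.le hq hT) hN hrange) β).trans hβ⟩

end InvariantSubspace

/-- `T` is `g_σ^{β+1}`-invertible iff there are `T`-invariant subspaces `M, N` with
`N` closed, `X = M ⊕ N` algebraically, `T|_M : M → M` bijective, and
`acc^β σ(T_N) ⊆ {0}`. -/
theorem gInv_iff_exists_algebraic_decomposition (T : X →L[ℂ] X) (β : Ordinal) :
    GInv β T ↔
      ∃ (M N : Submodule ℂ X) (hM : ∀ x ∈ M, T x ∈ M) (hN : ∀ x ∈ N, T x ∈ N),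
        IsClosed (N : Set X) ∧ IsCompl M N ∧
        Function.Bijective (restr T M hM) ∧
        cbd (spectrum ℂ (restr T N hN)) β ⊆ {0} := by
  constructor
  · rintro ⟨M, N, hM, hN, hM_closed, hN_closed, hMN, hT, hβ⟩
    have : CompleteSpace M := hM_closed.completeSpace_coe
    exact ⟨M, N, hM, hN, hN_closed, hMN, ContinuousLinearMap.isUnit_iff_bijective.1 hT, hβ⟩
  · rintro ⟨M, N, hM, hN, hN_closed, hMN, hT, hβ⟩
    have : CompleteSpace N := hN_closed.completeSpace_coe
    have hcount : (spectrum ℂ (restr T N hN)).Countable :=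
      countable_of_countable_cbd (spectrum.isClosed (𝕜 := ℂ) (restr T N hN))
        ((countable_singleton 0).mono hβ)
    have h0 : (0 : ℂ) ∈ resolventSet ℂ (quotientOperator T N hN) :=
      not_not.1 (spectrum.zero_notMem ℂ (isUnit_quotientOperator_of_isCompl hMN hM hN hT))
    obtain ⟨r, hr, hq, hsphere⟩ := exists_sphere_subset_resolventSet hN hcount h0
    exact gInv_of_closedBall_subset_resolventSet hN hβ hr hq hsphere
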